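/- Let S and A be finite nonempty types, P : S → A → PMF S a transition kernel, γ a real number with 0 ≤ γ < 1, and r : S → A → ℝ a reward function. For a policy π : S → PMF A let Q^π denote the unique solution of Q^π(s,a) = r(s,a) + γ · ∑_{s'} (P s a) s' · ∑_{a'} (π s') a' · Q^π(s',a'). Suppose two policies π and π' satisfy, for every state s, ∑_a (π' s) a · Q^π(s,a) ≥ ∑_a (π s) a · Q^π(s,a). Then Q^{π'}(s,a) ≥ Q^π(s,a) for all (s,a). -/

import Mathlib

open scoped BigOperators

/-!
Since `π'` is at least as good as `π` on `Q^π`, the function `Q^π` is a subsolution `Q ≤ T Q` of the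
Bellman equation of `π'`. The Bellman operator is monotone and discounts constants by `γ < 1`, so it
obeys a comparison principle: every bounded subsolution lies below the fixed point `Q^{π'}`, because
a positive supremum `m` of their difference would satisfy `m ≤ γ m`.
-/

section Comparison

variable {ι : Type*} {T : (ι → ℝ) → ι → ℝ} {γ : ℝ} {f g : ι → ℝ}

theorem le_of_le_map_of_map_le (hT : Monotone T)
    (hdisc : ∀ (h : ι → ℝ) (c : ℝ), 0 ≤ c → ∀ x, T (fun y => h y + c) x ≤ T h x + γ * c)
    (hγ : γ < 1) (hf : f ≤ T f) (hg : T g ≤ g)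
    (hbdd : BddAbove (Set.range fun x => f x - g x)) : f ≤ g := by
  by_contra hfg
  obtain ⟨x₀, hx₀⟩ : ∃ x, g x < f x := by simpa only [Pi.le_def, not_forall, not_le] using hfg
  have : Nonempty ι := ⟨x₀⟩
  set m := ⨆ x, (f x - g x)
  have hm_pos : 0 < m := (sub_pos.2 hx₀).trans_le (le_ciSup hbdd x₀)
  have hf_le : f ≤ fun x => g x + m := fun x => sub_le_iff_le_add'.1 (le_ciSup hbdd x)
  have hgap (x : ι) : f x - g x ≤ γ * m := sub_le_iff_le_add'.2 <|
    calc f x ≤ T f x := hf x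
      _ ≤ T (fun y => g y + m) x := hT hf_le x
      _ ≤ T g x + γ * m := hdisc g m hm_pos.le x
      _ ≤ g x + γ * m := by gcongr; exact hg x
  have hm_le : m ≤ γ * m := ciSup_le hgap
  exact hm_le.not_gt (mul_lt_of_lt_one_left hm_pos hγ)

end Comparison

section Expectation

variable {α : Type*} [Fintype α]

/-- The expectation of a real function under a probability mass function on a finite type, as the
finite sum that appears in Bellman equations rather than as a Bochner integral. -/
def pmfExpectation (p : PMF α) (f : α → ℝ) : ℝ :=
  ∑ x, (p x).toReal * f x

theorem pmf_sum_toReal (p : PMF α) : ∑ x, (p x).toReal = 1 := by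
  rw [← ENNReal.toReal_sum fun x _ => p.apply_ne_top x,
    ← tsum_fintype (L := .unconditional α), p.tsum_coe, ENNReal.toReal_one]

theorem pmfExpectation_mono (p : PMF α) : Monotone (pmfExpectation p) := fun _ _ hfg =>
  Finset.sum_le_sum fun x _ => mul_le_mul_of_nonneg_left (hfg x) ENNReal.toReal_nonneg

theorem pmfExpectation_add_const (p : PMF α) (f : α → ℝ) (c : ℝ) :
    pmfExpectation p (fun x => f x + c) = pmfExpectation p f + c := by
  simp only [pmfExpectation, mul_add, Finset.sum_add_distrib, ← Finset.sum_mul, pmf_sum_toReal,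
    one_mul]

end Expectation

section Bellman

variable {S A : Type*}

/-- The state-value function obtained by averaging `Q` over the actions chosen by `π`; it is `V^π`
when `Q = Q^π`. -/
def policyValue [Fintype A] (π : S → PMF A) (Q : S × A → ℝ) (s : S) : ℝ :=
  pmfExpectation (π s) fun a => Q (s, a)

variable [Fintype S] (P : S → A → PMF S) (γ : ℝ) (r : S → A → ℝ)

/-- The one-step lookahead of a state-value function `V`: the value of a state-action
pair when the state it leads to is valued by `V`. -/
def bellmanBackup (V : S → ℝ) (x : S × A) : ℝ :=
  r x.1 x.2 + γ * pmfExpectation (P x.1 x.2) V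

variable {γ} in
theorem bellmanBackup_mono (hγ : 0 ≤ γ) : Monotone (bellmanBackup P γ r) := fun _ _ hV x =>
  add_le_add_right (mul_le_mul_of_nonneg_left (pmfExpectation_mono (P x.1 x.2) hV) hγ) _

theorem bellmanBackup_add_const (V : S → ℝ) (c : ℝ) (x : S × A) :
    bellmanBackup P γ r (fun s => V s + c) x = bellmanBackup P γ r V x + γ * c := by
  simp only [bellmanBackup, pmfExpectation_add_const, mul_add, add_assoc]

variable [Fintype A] (π : S → PMF A)

/-- The Bellman operator `T^π` on action-value functions; its fixed point is `Q^π`. -/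
def bellmanOperator (Q : S × A → ℝ) : S × A → ℝ :=
  bellmanBackup P γ r (policyValue π Q)

variable {γ} in
theorem bellmanOperator_mono (hγ : 0 ≤ γ) : Monotone (bellmanOperator P γ r π) := fun _ _ hQ =>
  bellmanBackup_mono P r hγ fun s => pmfExpectation_mono (π s) fun a => hQ (s, a)

theorem bellmanOperator_add_const (Q : S × A → ℝ) (c : ℝ) (x : S × A) :
    bellmanOperator P γ r π (fun y => Q y + c) x = bellmanOperator P γ r π Q x + γ * c := by
  have hvalue : policyValue π (fun y => Q y + c) = fun s => policyValue π Q s + c :=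
    funext fun s => pmfExpectation_add_const (π s) (fun a => Q (s, a)) c
  rw [bellmanOperator, hvalue, bellmanBackup_add_const, bellmanOperator]

variable {γ} in
theorem le_of_le_bellmanOperator_of_bellmanOperator_le (hγ₀ : 0 ≤ γ) (hγ₁ : γ < 1)
    {Q Q' : S × A → ℝ} (hQ : Q ≤ bellmanOperator P γ r π Q)
    (hQ' : bellmanOperator P γ r π Q' ≤ Q') : Q ≤ Q' :=
  le_of_le_map_of_map_le (bellmanOperator_mono P r π hγ₀)
    (fun f c _ x => (bellmanOperator_add_const P γ r π f c x).le) hγ₁ hQ hQ'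
    (Set.finite_range _).bddAbove

end Bellman

/-- Monotonic policy improvement: if `π'` puts at least as much value as `π`
on the Q-function of `π` at every state, then `Q^{π'} ≥ Q^π` pointwise. -/
theorem policy_improvement {S A : Type*}
    [Fintype S] [Nonempty S] [Fintype A] [Nonempty A]
    (P : S → A → PMF S) (γ : ℝ) (hγ0 : 0 ≤ γ) (hγ1 : γ < 1)
    (r : S → A → ℝ) (π π' : S → PMF A)
    (Qπ : S × A → ℝ)
    (hQπ : ∀ (s : S) (a : A),
      Qπ (s, a) = r s a + γ * ∑ s' : S, ((P s a) s').toReal *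
        ∑ a' : A, ((π s') a').toReal * Qπ (s', a'))
    (Qπ' : S × A → ℝ)
    (hQπ' : ∀ (s : S) (a : A),
      Qπ' (s, a) = r s a + γ * ∑ s' : S, ((P s a) s').toReal *
        ∑ a' : A, ((π' s') a').toReal * Qπ' (s', a'))
    (himp : ∀ s : S,
      ∑ a : A, ((π' s) a).toReal * Qπ (s, a) ≥
        ∑ a : A, ((π s) a).toReal * Qπ (s, a)) :
    ∀ (s : S) (a : A), Qπ' (s, a) ≥ Qπ (s, a) := by
  have hfix : Qπ = bellmanOperator P γ r π Qπ := funext fun x => hQπ x.1 x.2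
  have hfix' : Qπ' = bellmanOperator P γ r π' Qπ' := funext fun x => hQπ' x.1 x.2
  have hvalue : policyValue π Qπ ≤ policyValue π' Qπ := himp
  have hsub : Qπ ≤ bellmanOperator P γ r π' Qπ :=
    hfix.le.trans (bellmanBackup_mono P r hγ0 hvalue)
  have hle : Qπ ≤ Qπ' :=
    le_of_le_bellmanOperator_of_bellmanOperator_le P r π' hγ0 hγ1 hsub hfix'.ge
  exact fun s a => hle (s, a)
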